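/- If the metric of a Kenmotsu manifold of dimension 2n+1 is a gradient almost *-Ricci soliton with potential function f and soliton function λ, then the curvature tensor satisfies R(X,Y)Df = (∇_Y Q)X - (∇_X Q)Y + Y(λ)X - X(λ)Y + η(X)Y - η(Y)X for all vector fields X, Y. -/

import Mathlib

/-- An abstract algebraic model of a `(2n+1)`-dimensional Kenmotsu manifold:
`C` plays the role of the ring of smooth functions on the manifold and vector
fields are modelled as `ℝ`-derivations of `C`.  A global orthonormal frame `e`
is included in order to express traces (Ricci tensor, scalar curvature). -/
structure KenmotsuManifold (n : ℕ) (C : Type*) [CommRing C] [Algebra ℝ C] where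
  /-- the Riemannian metric -/
  g : Derivation ℝ C C → Derivation ℝ C C → C
  /-- the structure `(1,1)`-tensor field -/
  φ : Derivation ℝ C C → Derivation ℝ C C
  /-- the Reeb (characteristic) vector field -/
  ξ : Derivation ℝ C C
  /-- the contact `1`-form -/
  η : Derivation ℝ C C → C
  /-- the Levi-Civita connection -/
  nabla : Derivation ℝ C C → Derivation ℝ C C → Derivation ℝ C C
  /-- a global orthonormal frame, used to take traces -/
  e : Fin (2 * n + 1) → Derivation ℝ C C
  g_symm : ∀ X Y, g X Y = g Y X
  g_add_left : ∀ X Y Z, g (X + Y) Z = g X Z + g Y Z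
  g_smul_left : ∀ (f : C) (X Y), g (f • X) Y = f * g X Y
  g_nondeg : ∀ X, (∀ Y, g X Y = 0) → X = 0
  g_frame : ∀ i j, g (e i) (e j) = if i = j then 1 else 0
  frame_span : ∀ X : Derivation ℝ C C, X = ∑ i, g X (e i) • e i
  phi_phi : ∀ X, φ (φ X) = -X + η X • ξ
  phi_linear : ∀ (f : C) (X Y), φ (f • X + Y) = f • φ X + φ Y
  eta_xi : η ξ = 1
  eta_def : ∀ X, η X = g X ξ
  compat_phi : ∀ X Y, g (φ X) (φ Y) = g X Y - η X * η Y
  nabla_add_left : ∀ X Y Z, nabla (X + Y) Z = nabla X Z + nabla Y Z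
  nabla_smul_left : ∀ (f : C) (X Y), nabla (f • X) Y = f • nabla X Y
  nabla_add_right : ∀ X Y Z, nabla X (Y + Z) = nabla X Y + nabla X Z
  nabla_leibniz : ∀ (X) (f : C) (Y), nabla X (f • Y) = X f • Y + f • nabla X Y
  torsion_free : ∀ X Y, nabla X Y - nabla Y X = ⁅X, Y⁆
  metric_compat : ∀ X Y Z, X (g Y Z) = g (nabla X Y) Z + g Y (nabla X Z)
  /-- the Kenmotsu condition `(∇_X φ)Y = g(φX,Y)ξ - η(Y)φX` -/
  kenmotsu : ∀ X Y, nabla X (φ Y) - φ (nabla X Y) = g (φ X) Y • ξ - η Y • φ X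

namespace KenmotsuManifold

variable {n : ℕ} {C : Type*} [CommRing C] [Algebra ℝ C] (K : KenmotsuManifold n C)

/-- the Riemann curvature tensor `R(X,Y)Z = ∇_X∇_Y Z - ∇_Y∇_X Z - ∇_{[X,Y]}Z` -/
def Rm (X Y Z : Derivation ℝ C C) : Derivation ℝ C C :=
  K.nabla X (K.nabla Y Z) - K.nabla Y (K.nabla X Z) - K.nabla ⁅X, Y⁆ Z

/-- the Ricci tensor `S(X,Y) = trace (Z ↦ R(Z,X)Y)` -/
def S (X Y : Derivation ℝ C C) : C := ∑ i, K.g (K.Rm (K.e i) X Y) (K.e i)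

/-- the Ricci operator `Q`, `g(QX,Y) = S(X,Y)` -/
def Q (X : Derivation ℝ C C) : Derivation ℝ C C := ∑ i, K.S X (K.e i) • K.e i

/-- the scalar curvature `r` -/
def r : C := ∑ i, K.S (K.e i) (K.e i)

/-- the `*`-Ricci tensor `S*(X,Y) = (1/2) trace (Z ↦ R(X,φY)φZ)` -/
noncomputable def Sstar (X Y : Derivation ℝ C C) : C :=
  (2 : ℝ)⁻¹ • ∑ i, K.g (K.Rm X (K.φ Y) (K.φ (K.e i))) (K.e i)

/-- the covariant derivative `(∇_X Q)Y` of the Ricci operator -/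
def nablaQ (X Y : Derivation ℝ C C) : Derivation ℝ C C :=
  K.nabla X (K.Q Y) - K.Q (K.nabla X Y)

/-- the Lie derivative `(£_V g)(X,Y)` of the metric -/
def lieG (V X Y : Derivation ℝ C C) : C :=
  V (K.g X Y) - K.g ⁅V, X⁆ Y - K.g X ⁅V, Y⁆

/-- the Lie derivative `(£_V S)(X,Y)` of the Ricci tensor -/
def lieS (V X Y : Derivation ℝ C C) : C :=
  V (K.S X Y) - K.S ⁅V, X⁆ Y - K.S X ⁅V, Y⁆

/-- `g` is a `*`-Ricci soliton with potential vector field `V` and soliton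
constant `l`: `£_V g + 2S* + 2l g = 0`. -/
def IsStarRicciSoliton (V : Derivation ℝ C C) (l : ℝ) : Prop :=
  ∀ X Y, K.lieG V X Y + 2 * K.Sstar X Y + (2 * l) • K.g X Y = 0

/-- `g` is a gradient almost `*`-Ricci soliton with potential function `f`
(with gradient `F`, i.e. `g(F,X) = Xf`) and soliton function `l`:
`Hess f + S* + l g = 0`. -/
def IsGradAlmostStarRicciSoliton (f : C) (F : Derivation ℝ C C) (l : C) : Prop :=
  (∀ X, K.g F X = X f) ∧ ∀ X Y, K.g (K.nabla X F) Y + K.Sstar X Y + l * K.g X Y = 0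

/-- `M` is `η`-Einstein: `S = α g + β η⊗η`. -/
def IsEtaEinstein : Prop :=
  ∃ α β : C, ∀ X Y, K.S X Y = α * K.g X Y + β * (K.η X * K.η Y)

end KenmotsuManifold

/-!
The value `a = η(φξ)` has to be controlled first, since `φξ = 0` is not among the axioms. They give
`φξ = a ξ`, `a² = 0` and `∇_X ξ = X - η(X) ξ - a φX`, hence `R(ξ,X)ξ = X - η(X) ξ - 2a φX`. The
Jacobi operator `R(ξ,·)ξ` is self-adjoint whereas `a φ` is skew-adjoint, so `a φ = 0`, and a trace
gives `a = 0` unless `n = 0`.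

Next `S* = S + (2n - 1) g + η ⊗ η`: for `n ≠ 0` the first Bianchi identity turns `S*(X,Y)` into the
trace of `Z ↦ -φ R(Z,X)φY`, in which `φ` is commuted past the curvature; for `n = 0` both sides
vanish. The soliton equation thus reads `∇_X Df = -QX - (λ + 2n - 1) X - η(X) ξ`, and `R(X,Y)Df`
is obtained by differentiating this once more and antisymmetrizing.
-/

namespace KenmotsuManifold

variable {n : ℕ} {C : Type*} [CommRing C] [Algebra ℝ C] (K : KenmotsuManifold n C)

section Linearity

lemma g_add_right (X Y Z : Derivation ℝ C C) : K.g X (Y + Z) = K.g X Y + K.g X Z := by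
  rw [K.g_symm, K.g_add_left, K.g_symm Y, K.g_symm Z]

lemma g_smul_right (c : C) (X Y : Derivation ℝ C C) : K.g X (c • Y) = c * K.g X Y := by
  rw [K.g_symm, K.g_smul_left, K.g_symm Y]

lemma g_zero_left (Y : Derivation ℝ C C) : K.g 0 Y = 0 :=
  (AddMonoidHom.mk' (K.g · Y) (K.g_add_left · · Y)).map_zero

lemma g_neg_left (X Y : Derivation ℝ C C) : K.g (-X) Y = -K.g X Y :=
  (AddMonoidHom.mk' (K.g · Y) (K.g_add_left · · Y)).map_neg X

lemma g_neg_right (X Y : Derivation ℝ C C) : K.g X (-Y) = -K.g X Y :=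
  (AddMonoidHom.mk' (K.g X) (K.g_add_right X)).map_neg Y

lemma g_sub_left (X Y Z : Derivation ℝ C C) : K.g (X - Y) Z = K.g X Z - K.g Y Z :=
  (AddMonoidHom.mk' (K.g · Z) (K.g_add_left · · Z)).map_sub X Y

lemma g_sum_left {ι : Type*} (s : Finset ι) (V : ι → Derivation ℝ C C) (Y : Derivation ℝ C C) :
    K.g (∑ i ∈ s, V i) Y = ∑ i ∈ s, K.g (V i) Y :=
  map_sum (AddMonoidHom.mk' (K.g · Y) (K.g_add_left · · Y)) V s

lemma ext_g {X Y : Derivation ℝ C C} (h : ∀ W, K.g X W = K.g Y W) : X = Y :=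
  sub_eq_zero.mp <| K.g_nondeg _ fun W => by rw [K.g_sub_left, h, sub_self]

lemma phi_add (X Y : Derivation ℝ C C) : K.φ (X + Y) = K.φ X + K.φ Y := by
  simpa using K.phi_linear 1 X Y

lemma phi_neg (X : Derivation ℝ C C) : K.φ (-X) = -K.φ X :=
  (AddMonoidHom.mk' K.φ K.phi_add).map_neg X

lemma phi_sub (X Y : Derivation ℝ C C) : K.φ (X - Y) = K.φ X - K.φ Y :=
  (AddMonoidHom.mk' K.φ K.phi_add).map_sub X Y

lemma phi_smul (c : C) (X : Derivation ℝ C C) : K.φ (c • X) = c • K.φ X := by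
  have phi_zero : K.φ 0 = 0 := (AddMonoidHom.mk' K.φ K.phi_add).map_zero
  simpa [phi_zero] using K.phi_linear c X 0

lemma g_xi_right (X : Derivation ℝ C C) : K.g X K.ξ = K.η X :=
  (K.eta_def X).symm

lemma g_xi_left (X : Derivation ℝ C C) : K.g K.ξ X = K.η X := by
  rw [K.g_symm, K.g_xi_right]

lemma eta_add (X Y : Derivation ℝ C C) : K.η (X + Y) = K.η X + K.η Y := by
  simp only [K.eta_def, K.g_add_left]

lemma eta_sub (X Y : Derivation ℝ C C) : K.η (X - Y) = K.η X - K.η Y := by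
  simp only [K.eta_def, K.g_sub_left]

lemma eta_smul (c : C) (X : Derivation ℝ C C) : K.η (c • X) = c * K.η X := by
  simp only [K.eta_def, K.g_smul_left]

lemma nabla_sub_left (X Y Z : Derivation ℝ C C) :
    K.nabla (X - Y) Z = K.nabla X Z - K.nabla Y Z :=
  (AddMonoidHom.mk' (K.nabla · Z) (K.nabla_add_left · · Z)).map_sub X Y

lemma nabla_zero_right (X : Derivation ℝ C C) : K.nabla X 0 = 0 :=
  (AddMonoidHom.mk' (K.nabla X) (K.nabla_add_right X)).map_zero

lemma nabla_neg_right (X Y : Derivation ℝ C C) : K.nabla X (-Y) = -K.nabla X Y :=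
  (AddMonoidHom.mk' (K.nabla X) (K.nabla_add_right X)).map_neg Y

lemma nabla_sub_right (X Y Z : Derivation ℝ C C) :
    K.nabla X (Y - Z) = K.nabla X Y - K.nabla X Z :=
  (AddMonoidHom.mk' (K.nabla X) (K.nabla_add_right X)).map_sub Y Z

end Linearity

section Frame

lemma sum_g_frame_mul_g_map (A : Derivation ℝ C C →ₗ[C] Derivation ℝ C C)
    (X Y : Derivation ℝ C C) : ∑ i, K.g X (K.e i) * K.g (A (K.e i)) Y = K.g (A X) Y := by
  conv_rhs => rw [K.frame_span X, map_sum, K.g_sum_left]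
  simp only [map_smul, K.g_smul_left]

lemma sum_g_frame_mul_g (X Y : Derivation ℝ C C) :
    ∑ i, K.g X (K.e i) * K.g (K.e i) Y = K.g X Y :=
  K.sum_g_frame_mul_g_map LinearMap.id X Y

lemma sum_g_frame_self : ∑ i, K.g (K.e i) (K.e i) = 2 * (n : C) + 1 := by
  simp [K.g_frame]

lemma sum_eta_frame_mul_self : ∑ i, K.η (K.e i) * K.η (K.e i) = 1 := by
  have h := K.sum_g_frame_mul_g K.ξ K.ξ
  simpa only [K.g_xi_left, K.g_xi_right, K.eta_xi] using h

lemma sum_g_map_adjoint (A : Derivation ℝ C C →ₗ[C] Derivation ℝ C C)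
    {B B' : Derivation ℝ C C → Derivation ℝ C C} (hB : ∀ X Y, K.g (B X) Y = K.g X (B' Y)) :
    ∑ i, K.g (A (B (K.e i))) (K.e i) = ∑ i, K.g (A (K.e i)) (B' (K.e i)) :=
  calc ∑ i, K.g (A (B (K.e i))) (K.e i)
      = ∑ i, ∑ j, K.g (B (K.e i)) (K.e j) * K.g (A (K.e j)) (K.e i) := by
        simp only [K.sum_g_frame_mul_g_map]
    _ = ∑ j, ∑ i, K.g (A (K.e j)) (K.e i) * K.g (K.e i) (B' (K.e j)) := by
        rw [Finset.sum_comm]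
        simp only [hB, mul_comm]
    _ = ∑ j, K.g (A (K.e j)) (B' (K.e j)) := by
        simp only [K.sum_g_frame_mul_g]

end Frame

section Curvature

lemma rm_eq_nabla (X Y Z : Derivation ℝ C C) : K.Rm X Y Z =
    K.nabla X (K.nabla Y Z) - K.nabla (K.nabla X Y) Z
      - (K.nabla Y (K.nabla X Z) - K.nabla (K.nabla Y X) Z) := by
  rw [Rm, ← K.torsion_free, K.nabla_sub_left]
  abel

lemma rm_self (X Z : Derivation ℝ C C) : K.Rm X X Z = 0 := by
  rw [K.rm_eq_nabla, sub_self]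

lemma rm_swap (X Y Z : Derivation ℝ C C) : K.Rm X Y Z = -K.Rm Y X Z := by
  rw [K.rm_eq_nabla X, K.rm_eq_nabla Y, neg_sub]

/-- The curvature endomorphism `Z ↦ R(Z,X)Y`, bundled as a `C`-linear map; its trace is the Ricci
tensor `S(X,Y)`. -/
def rmEnd (X Y : Derivation ℝ C C) : Derivation ℝ C C →ₗ[C] Derivation ℝ C C where
  toFun Z := K.Rm Z X Y
  map_add' Z W := by
    simp only [rm_eq_nabla, K.nabla_add_right, K.nabla_add_left]
    abel
  map_smul' c Z := by
    simp only [rm_eq_nabla, K.nabla_smul_left, K.nabla_leibniz, K.nabla_add_left,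
      RingHom.id_apply]
    module

lemma rmEnd_apply (X Y Z : Derivation ℝ C C) : K.rmEnd X Y Z = K.Rm Z X Y :=
  rfl

lemma rm_bianchi (X Y Z : Derivation ℝ C C) : K.Rm X Y Z + K.Rm Y Z X + K.Rm Z X Y = 0 := by
  have jacobi := lie_jacobi X Y Z
  simp only [← K.torsion_free, K.nabla_sub_right, K.nabla_sub_left] at jacobi
  simp only [rm_eq_nabla]
  rw [← jacobi]
  abel

lemma g_rm_swap_left (X Y Z W : Derivation ℝ C C) :
    K.g (K.Rm X Y Z) W = -K.g (K.Rm Y X Z) W := by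
  rw [K.rm_swap, K.g_neg_left]

lemma g_rm_swap_right (X Y Z W : Derivation ℝ C C) :
    K.g (K.Rm X Y Z) W = -K.g (K.Rm X Y W) Z := by
  have lie_g : ⁅X, Y⁆ (K.g Z W) = X (Y (K.g Z W)) - Y (X (K.g Z W)) :=
    Derivation.commutator_apply ..
  simp only [K.metric_compat, map_add] at lie_g
  simp only [Rm, K.g_sub_left]
  rw [K.g_symm (K.nabla X (K.nabla Y W)) Z, K.g_symm (K.nabla Y (K.nabla X W)) Z,
    K.g_symm (K.nabla ⁅X, Y⁆ W) Z]
  linear_combination -lie_g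

lemma g_rm_bianchi (X Y Z W : Derivation ℝ C C) :
    K.g (K.Rm X Y Z) W + K.g (K.Rm Y Z X) W + K.g (K.Rm Z X Y) W = 0 := by
  rw [← K.g_add_left, ← K.g_add_left, K.rm_bianchi, K.g_zero_left]

lemma g_rm_pair_symm (X Y Z W : Derivation ℝ C C) :
    K.g (K.Rm X Y Z) W = K.g (K.Rm Z W X) Y := by
  have : IsAddTorsionFree C := .of_isTorsionFree ℝ C
  refine sub_eq_zero.mp (self_eq_neg.mp ?_)
  linear_combination K.g_rm_bianchi X Y Z W + K.g_rm_bianchi Y Z W X - K.g_rm_bianchi Z W X Y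
    - K.g_rm_bianchi W X Y Z - K.g_rm_swap_right Y Z X W - K.g_rm_swap_right Z X Y W
    - K.g_rm_swap_right Z W Y X - K.g_rm_swap_right W Y Z X + K.g_rm_swap_right W X Z Y
    + K.g_rm_swap_right X Y W Z + K.g_rm_swap_left X Z W Y + K.g_rm_swap_left Y W X Z

lemma g_q (X Y : Derivation ℝ C C) : K.g (K.Q X) Y = K.S X Y :=
  calc K.g (K.Q X) Y
      = ∑ j, ∑ i, K.g (K.Rm (K.e j) X (K.e i)) (K.e j) * K.g (K.e i) Y := by
        simp only [Q, K.g_sum_left, K.g_smul_left, S, Finset.sum_mul]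
        rw [Finset.sum_comm]
    _ = ∑ j, ∑ i, -(K.g (K.Rm (K.e j) X (K.e j)) (K.e i) * K.g (K.e i) Y) := by
        refine Finset.sum_congr rfl fun j _ => Finset.sum_congr rfl fun i _ => ?_
        rw [K.g_rm_swap_right, neg_mul]
    _ = ∑ j, K.g (K.Rm (K.e j) X Y) (K.e j) := by
        simp only [Finset.sum_neg_distrib, K.sum_g_frame_mul_g, K.g_rm_swap_right _ X Y]

end Curvature

section ReebField

lemma eta_phi_smul_xi (X : Derivation ℝ C C) : K.η (K.φ X) • K.ξ = K.η X • K.φ K.ξ := by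
  -- both sides equal `φ³X + φX`
  have phi_cube := K.phi_phi (K.φ X)
  rw [K.phi_phi X, K.phi_add, K.phi_neg, K.phi_smul] at phi_cube
  exact (add_left_cancel phi_cube).symm

lemma phi_xi : K.φ K.ξ = K.η (K.φ K.ξ) • K.ξ := by
  rw [K.eta_phi_smul_xi, K.eta_xi, one_smul]

lemma eta_phi (X : Derivation ℝ C C) : K.η (K.φ X) = K.η (K.φ K.ξ) * K.η X := by
  have h := congrArg K.η (K.eta_phi_smul_xi X)
  rw [K.eta_smul, K.eta_smul, K.eta_xi] at h
  linear_combination h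

lemma eta_phi_xi_smul_phi_xi : K.η (K.φ K.ξ) • K.φ K.ξ = 0 := by
  rw [← K.phi_smul, ← K.phi_xi, K.phi_phi, K.eta_xi, one_smul, neg_add_cancel]

lemma eta_phi_xi_mul_self : K.η (K.φ K.ξ) * K.η (K.φ K.ξ) = 0 := by
  rw [← K.eta_smul, K.eta_phi_xi_smul_phi_xi, K.eta_def, K.g_zero_left]

lemma g_phi_left (X Y : Derivation ℝ C C) :
    K.g (K.φ X) Y = -K.g X (K.φ Y) + 2 * K.η (K.φ K.ξ) * K.η X * K.η Y := by
  have h := K.compat_phi X (K.φ Y)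
  rw [K.phi_phi, K.g_add_right, K.g_neg_right, K.g_smul_right, K.g_xi_right, K.eta_phi X,
    K.eta_phi Y] at h
  linear_combination -h

lemma eta_nabla_xi (X : Derivation ℝ C C) : K.η (K.nabla X K.ξ) = 0 := by
  have h := K.metric_compat X K.ξ K.ξ
  rw [K.g_xi_right, K.g_xi_right, K.g_xi_left, K.eta_xi, Derivation.map_one_eq_zero] at h
  have : IsAddTorsionFree C := .of_isTorsionFree ℝ C
  exact self_eq_neg.mp (eq_neg_of_add_eq_zero_left h.symm)

lemma apply_eta_phi_xi (X : Derivation ℝ C C) : X (K.η (K.φ K.ξ)) = 0 := by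
  have h := congrArg K.η (K.kenmotsu X K.ξ)
  rw [K.phi_xi, K.nabla_leibniz] at h
  simp only [K.eta_sub, K.eta_add, K.eta_smul, K.g_xi_right, K.eta_xi, K.eta_phi X,
    K.eta_phi (K.nabla X K.ξ), K.eta_nabla_xi] at h
  linear_combination h

lemma nabla_xi_eq_sub_smul_phi (X : Derivation ℝ C C) :
    K.nabla X K.ξ = X - K.η X • K.ξ - K.η (K.φ K.ξ) • K.φ X := by
  have kenmotsu_xi := K.kenmotsu X K.ξ
  have nabla_phi_xi : K.nabla X (K.φ K.ξ) = K.η (K.φ K.ξ) • K.nabla X K.ξ := by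
    conv_lhs => rw [K.phi_xi, K.nabla_leibniz, K.apply_eta_phi_xi, zero_smul, zero_add]
  rw [nabla_phi_xi, K.g_xi_right, K.eta_xi, one_smul, K.eta_phi X] at kenmotsu_xi
  have sq_smul (Z : Derivation ℝ C C) : K.η (K.φ K.ξ) • K.η (K.φ K.ξ) • Z = 0 := by
    rw [smul_smul, K.eta_phi_xi_mul_self, zero_smul]
  have phi_kenmotsu_xi : K.η (K.φ K.ξ) • K.φ (K.nabla X K.ξ) + K.nabla X K.ξ
      = X - K.η X • K.ξ := by
    have h := congrArg K.φ kenmotsu_xi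
    simp only [K.phi_sub, K.phi_smul, K.phi_phi, K.eta_nabla_xi] at h
    linear_combination (norm := module) h + K.η X • K.eta_phi_xi_smul_phi_xi
  have smul_kenmotsu_xi : K.η (K.φ K.ξ) • K.φ (K.nabla X K.ξ) = K.η (K.φ K.ξ) • K.φ X := by
    linear_combination (norm := module) sq_smul (K.nabla X K.ξ) - K.η X • sq_smul K.ξ
      - K.η (K.φ K.ξ) • kenmotsu_xi
  rw [← smul_kenmotsu_xi, ← phi_kenmotsu_xi, add_sub_cancel_left]

lemma rm_xi_xi_eq_sub_smul_phi (X : Derivation ℝ C C) :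
    K.Rm K.ξ X K.ξ = X - K.η X • K.ξ - (2 * K.η (K.φ K.ξ)) • K.φ X := by
  have nabla_xi_xi : K.nabla K.ξ K.ξ = 0 := by
    rw [K.nabla_xi_eq_sub_smul_phi, K.eta_xi, K.eta_phi_xi_smul_phi_xi, one_smul, sub_self,
      sub_zero]
  have xi_eta : K.ξ (K.η X) = K.η (K.nabla K.ξ X) := by
    rw [K.eta_def, K.metric_compat, nabla_xi_xi, K.g_symm X, K.g_zero_left, add_zero,
      K.g_xi_right]
  have nabla_xi_phi : K.nabla K.ξ (K.φ X) = K.φ (K.nabla K.ξ X) := by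
    rw [← sub_eq_zero, K.kenmotsu, K.phi_xi, K.g_smul_left, K.g_xi_left, smul_smul,
      mul_comm, sub_self]
  have nabla_xi_nabla_xi :
      K.nabla K.ξ (K.nabla X K.ξ) = K.nabla (K.nabla K.ξ X) K.ξ := by
    rw [K.nabla_xi_eq_sub_smul_phi X, K.nabla_xi_eq_sub_smul_phi (K.nabla K.ξ X),
      K.nabla_sub_right, K.nabla_sub_right, K.nabla_leibniz, K.nabla_leibniz, nabla_xi_xi, xi_eta,
      nabla_xi_phi, K.apply_eta_phi_xi, smul_zero, add_zero, zero_smul, zero_add]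
  have sq_smul : (K.η (K.φ K.ξ) * K.η (K.φ K.ξ)) • K.φ (K.φ X) = 0 := by
    rw [K.eta_phi_xi_mul_self, zero_smul]
  rw [K.rm_eq_nabla, nabla_xi_nabla_xi, nabla_xi_xi, K.nabla_zero_right,
    K.nabla_xi_eq_sub_smul_phi (K.nabla X K.ξ), K.eta_nabla_xi, K.nabla_xi_eq_sub_smul_phi X]
  simp only [K.phi_sub, K.phi_smul]
  linear_combination (norm := module) K.η X • K.eta_phi_xi_smul_phi_xi + sq_smul

lemma eta_phi_xi_smul_phi (X : Derivation ℝ C C) : K.η (K.φ K.ξ) • K.φ X = 0 := by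
  have : IsAddTorsionFree C := .of_isTorsionFree ℝ C
  refine K.g_nondeg _ fun Y => ?_
  have jacobi_symm := K.g_rm_pair_symm K.ξ X K.ξ Y
  simp only [K.rm_xi_xi_eq_sub_smul_phi, K.g_sub_left, K.g_smul_left, K.g_xi_left] at jacobi_symm
  have phi_skew := K.g_phi_left X Y
  rw [K.g_symm X] at jacobi_symm phi_skew
  have four_nsmul : 4 • (K.η (K.φ K.ξ) * K.g (K.φ X) Y) = 0 := by
    rw [nsmul_eq_mul]
    push_cast
    linear_combination -jacobi_symm + 2 * K.η (K.φ K.ξ) * phi_skew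
      + 4 * K.η X * K.η Y * K.eta_phi_xi_mul_self
  rw [K.g_smul_left]
  exact (nsmul_eq_zero_iff_right four_ne_zero).mp four_nsmul

lemma nabla_xi (X : Derivation ℝ C C) : K.nabla X K.ξ = X - K.η X • K.ξ := by
  rw [K.nabla_xi_eq_sub_smul_phi, K.eta_phi_xi_smul_phi, sub_zero]

lemma apply_eta (X Y : Derivation ℝ C C) :
    X (K.η Y) = K.η (K.nabla X Y) + K.g X Y - K.η X * K.η Y := by
  have h := K.metric_compat X Y K.ξ
  rw [K.g_symm Y (K.nabla X K.ξ), K.nabla_xi, K.g_sub_left, K.g_smul_left] at h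
  simp only [K.g_xi_left, K.g_xi_right] at h
  linear_combination h

lemma rm_xi_xi (X : Derivation ℝ C C) : K.Rm K.ξ X K.ξ = X - K.η X • K.ξ := by
  rw [K.rm_xi_xi_eq_sub_smul_phi, mul_smul, K.eta_phi_xi_smul_phi, smul_zero, sub_zero]

lemma nabla_phi (X Y : Derivation ℝ C C) :
    K.nabla X (K.φ Y) = K.φ (K.nabla X Y) + K.g (K.φ X) Y • K.ξ - K.η Y • K.φ X := by
  linear_combination (norm := module) K.kenmotsu X Y

lemma rm_phi (X Y Z : Derivation ℝ C C) :
    K.Rm X Y (K.φ Z) = K.φ (K.Rm X Y Z) + K.g Y Z • K.φ X - K.g X Z • K.φ Y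
      + K.g (K.φ Y) Z • X - K.g (K.φ X) Z • Y := by
  have hessian_phi (X Y : Derivation ℝ C C) :
      K.nabla X (K.nabla Y (K.φ Z)) - K.nabla (K.nabla X Y) (K.φ Z)
        = K.φ (K.nabla X (K.nabla Y Z) - K.nabla (K.nabla X Y) Z)
          + (K.g (K.φ X) (K.nabla Y Z) + K.g (K.φ Y) (K.nabla X Z)
            - K.η Y * K.g (K.φ X) Z - K.η X * K.g (K.φ Y) Z) • K.ξ
          - K.η (K.nabla Y Z) • K.φ X - K.η (K.nabla X Z) • K.φ Y + (K.η Z * K.η Y) • K.φ X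
          + (K.η X * K.η Z) • K.φ Y - K.g X Z • K.φ Y + K.g (K.φ Y) Z • X := by
    rw [K.nabla_phi Y Z, K.nabla_phi (K.nabla X Y) Z, K.nabla_sub_right, K.nabla_add_right,
      K.nabla_leibniz, K.nabla_leibniz, K.nabla_phi X (K.nabla Y Z), K.metric_compat,
      K.nabla_phi X Y, K.nabla_xi, K.apply_eta]
    simp only [K.g_sub_left, K.g_add_left, K.g_smul_left, K.g_xi_left, K.phi_sub]
    module
  rw [K.rm_eq_nabla, K.rm_eq_nabla, hessian_phi X Y, hessian_phi Y X, K.phi_sub (_ - _)]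
  module

end ReebField

section StarRicci

lemma sum_g_phi_frame_phi_frame : ∑ i, K.g (K.φ (K.e i)) (K.φ (K.e i)) = 2 * (n : C) := by
  simp only [K.compat_phi, Finset.sum_sub_distrib, K.sum_g_frame_self, K.sum_eta_frame_mul_self,
    add_sub_cancel_right]

lemma eta_phi_xi_eq_zero (hn : n ≠ 0) : K.η (K.φ K.ξ) = 0 := by
  have : IsAddTorsionFree C := .of_isTorsionFree ℝ C
  have nsmul_eq_zero : (2 * n) • K.η (K.φ K.ξ) = 0 :=
    calc (2 * n) • K.η (K.φ K.ξ)
        = ∑ i, K.g (K.η (K.φ K.ξ) • K.φ (K.e i)) (K.φ (K.e i)) := by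
          simp only [K.g_smul_left, ← Finset.mul_sum, K.sum_g_phi_frame_phi_frame]
          rw [nsmul_eq_mul]
          push_cast
          ring
      _ = 0 := by simp only [K.eta_phi_xi_smul_phi, K.g_zero_left, Finset.sum_const_zero]
  exact (nsmul_eq_zero_iff_right (mul_ne_zero two_ne_zero hn)).mp nsmul_eq_zero

lemma g_phi_left_eq_neg (hn : n ≠ 0) (X Y : Derivation ℝ C C) :
    K.g (K.φ X) Y = -K.g X (K.φ Y) := by
  rw [K.g_phi_left, K.eta_phi_xi_eq_zero hn]
  ring

lemma g_phi_self (hn : n ≠ 0) (X : Derivation ℝ C C) : K.g X (K.φ X) = 0 := by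
  have : IsAddTorsionFree C := .of_isTorsionFree ℝ C
  rw [← self_eq_neg, ← K.g_phi_left_eq_neg hn, K.g_symm]

lemma sstar_eq_sum_g_rm_phi (hn : n ≠ 0) (X Y : Derivation ℝ C C) :
    K.Sstar X Y = ∑ i, K.g (K.Rm (K.e i) X (K.φ Y)) (K.φ (K.e i)) := by
  have bianchi (Z : Derivation ℝ C C) : K.g (K.Rm X (K.φ Y) (K.φ Z)) Z =
      K.g (K.Rm Z X (K.φ Y)) (K.φ Z) - K.g (K.Rm (K.φ Z) X (K.φ Y)) Z := by
    linear_combination K.g_rm_bianchi X (K.φ Y) (K.φ Z) Z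
      - K.g_rm_pair_symm (K.φ Y) (K.φ Z) X Z - K.g_rm_swap_left X Z (K.φ Y) (K.φ Z)
  have trace_swap : ∑ i, K.g (K.Rm (K.φ (K.e i)) X (K.φ Y)) (K.e i)
      = -∑ i, K.g (K.Rm (K.e i) X (K.φ Y)) (K.φ (K.e i)) := by
    have h := K.sum_g_map_adjoint (K.rmEnd X (K.φ Y)) (B := K.φ) (B' := fun Z => -K.φ Z)
      fun Z W => by rw [K.g_neg_right, K.g_phi_left_eq_neg hn]
    simpa only [K.rmEnd_apply, K.g_neg_right, Finset.sum_neg_distrib] using h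
  rw [Sstar, inv_smul_eq_iff₀ two_ne_zero, two_smul]
  simp only [bianchi, Finset.sum_sub_distrib, trace_swap, sub_neg_eq_add]

lemma sum_eta_rm_mul_eta (X Y : Derivation ℝ C C) :
    ∑ i, K.η (K.Rm (K.e i) X Y) * K.η (K.e i) = K.η X * K.η Y - K.g X Y :=
  calc ∑ i, K.η (K.Rm (K.e i) X Y) * K.η (K.e i)
      = K.g (K.Rm K.ξ X Y) K.ξ := by
        simpa only [K.g_xi_left, K.g_xi_right, K.rmEnd_apply, mul_comm] using
          K.sum_g_frame_mul_g_map (K.rmEnd X Y) K.ξ K.ξ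
    _ = K.η X * K.η Y - K.g X Y := by
        rw [K.g_rm_swap_right, K.rm_xi_xi, K.g_sub_left, K.g_smul_left, K.g_xi_left, neg_sub]

lemma g_rm_phi_phi (hn : n ≠ 0) (X Y Z : Derivation ℝ C C) :
    K.g (K.Rm Z X (K.φ Y)) (K.φ Z) = K.g (K.Rm Z X Y) Z - K.η (K.Rm Z X Y) * K.η Z
      + K.g X Y * K.g (K.φ Z) (K.φ Z) + K.g Y Z * K.g Z (K.φ (K.φ X))
      - K.g (K.φ X) Z * K.g Z (K.φ Y) := by
  rw [K.rm_phi]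
  simp only [K.g_sub_left, K.g_add_left, K.g_smul_left, K.compat_phi (K.Rm Z X Y),
    K.g_phi_self hn]
  rw [K.g_symm X (K.φ Z), K.g_symm (K.φ X) (K.φ Z), K.g_phi_left_eq_neg hn Z (K.φ X),
    K.g_phi_left_eq_neg hn Z X, K.g_phi_left_eq_neg hn Z Y, K.g_symm (K.φ X) Z, K.g_symm Z Y]
  ring

lemma sstar_eq_s_add_g_add_eta_of_ne_zero (hn : n ≠ 0) (X Y : Derivation ℝ C C) :
    K.Sstar X Y = K.S X Y + (2 * n - 1) * K.g X Y + K.η X * K.η Y := by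
  have g_phi_phi : K.g Y (K.φ (K.φ X)) = -K.g (K.φ X) (K.φ Y) := by
    rw [K.g_symm (K.φ X), K.g_phi_left_eq_neg hn, neg_neg]
  calc K.Sstar X Y
      = ∑ i, K.g (K.Rm (K.e i) X (K.φ Y)) (K.φ (K.e i)) := K.sstar_eq_sum_g_rm_phi hn X Y
    _ = K.S X Y - (K.η X * K.η Y - K.g X Y) + K.g X Y * (2 * n) + K.g Y (K.φ (K.φ X))
          - K.g (K.φ X) (K.φ Y) := by
        simp only [K.g_rm_phi_phi hn, Finset.sum_sub_distrib, Finset.sum_add_distrib,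
          ← Finset.mul_sum, K.sum_eta_rm_mul_eta, K.sum_g_phi_frame_phi_frame,
          K.sum_g_frame_mul_g, S]
    _ = K.S X Y + (2 * n - 1) * K.g X Y + K.η X * K.η Y := by
        rw [g_phi_phi, K.compat_phi]
        ring

lemma eq_smul_frame_of_dim_one (K : KenmotsuManifold 0 C) (X : Derivation ℝ C C) :
    X = K.g X (K.e 0) • K.e 0 := by
  simpa using K.frame_span X

lemma g_eq_eta_mul_eta_of_dim_one (K : KenmotsuManifold 0 C) (X Y : Derivation ℝ C C) :
    K.g X Y = K.η X * K.η Y := by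
  have eta_sq : K.η (K.e 0) * K.η (K.e 0) = 1 := by
    simpa using K.sum_eta_frame_mul_self
  have g_frame_self : K.g (K.e 0) (K.e 0) = 1 := by
    simp [K.g_frame]
  rw [K.eq_smul_frame_of_dim_one X, K.eq_smul_frame_of_dim_one Y]
  simp only [K.g_smul_left, K.g_smul_right, K.eta_smul, g_frame_self]
  linear_combination -(K.g X (K.e 0) * K.g Y (K.e 0)) * eta_sq

lemma rm_eq_zero_of_dim_one (K : KenmotsuManifold 0 C) (X Y Z : Derivation ℝ C C) :
    K.Rm X Y Z = 0 := by
  have rm_smul_left (c : C) (V W : Derivation ℝ C C) : K.Rm (c • V) W Z = c • K.Rm V W Z :=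
    (K.rmEnd W Z).map_smul c V
  rw [K.eq_smul_frame_of_dim_one X, K.eq_smul_frame_of_dim_one Y, rm_smul_left, K.rm_swap,
    rm_smul_left, K.rm_self, smul_zero, neg_zero, smul_zero]

lemma sstar_eq_s_add_g_add_eta (X Y : Derivation ℝ C C) :
    K.Sstar X Y = K.S X Y + (2 * n - 1) * K.g X Y + K.η X * K.η Y := by
  rcases eq_or_ne n 0 with rfl | hn
  · simp [Sstar, S, K.rm_eq_zero_of_dim_one, K.g_zero_left, K.g_eq_eta_mul_eta_of_dim_one]
  · exact K.sstar_eq_s_add_g_add_eta_of_ne_zero hn X Y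

end StarRicci

section Soliton

lemma nabla_eq_of_hess_add_sstar {l : C} {F : Derivation ℝ C C}
    (h : ∀ X Y, K.g (K.nabla X F) Y + K.Sstar X Y + l * K.g X Y = 0) (X : Derivation ℝ C C) :
    K.nabla X F = -K.Q X - (l + (2 * n - 1)) • X - K.η X • K.ξ := by
  refine K.ext_g fun Y => ?_
  simp only [K.g_sub_left, K.g_neg_left, K.g_smul_left, K.g_q, K.g_xi_left]
  linear_combination h X Y - K.sstar_eq_s_add_g_add_eta X Y

lemma rm_eq_of_nabla_eq {c : C} {F : Derivation ℝ C C}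
    (hF : ∀ X, K.nabla X F = -K.Q X - c • X - K.η X • K.ξ) (X Y : Derivation ℝ C C) :
    K.Rm X Y F = K.nablaQ Y X - K.nablaQ X Y + Y c • X - X c • Y
      + K.η X • Y - K.η Y • X := by
  rw [K.rm_eq_nabla]
  simp only [hF, K.nabla_sub_right, K.nabla_neg_right, K.nabla_leibniz, K.nabla_xi, K.apply_eta,
    nablaQ, K.g_symm Y X]
  module

end Soliton

end KenmotsuManifold

theorem stmt12_general {n : ℕ} {C : Type*} [CommRing C] [Algebra ℝ C]
    (K : KenmotsuManifold n C) (l : C) (F : Derivation ℝ C C)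
    (h : ∀ X Y, K.g (K.nabla X F) Y + K.Sstar X Y + l * K.g X Y = 0) (X Y : Derivation ℝ C C) :
    K.Rm X Y F = K.nablaQ Y X - K.nablaQ X Y + Y l • X - X l • Y
      + K.η X • Y - K.η Y • X := by
  have apply_shift (Z : Derivation ℝ C C) : Z (l + (2 * n - 1)) = Z l := by
    have apply_two : Z 2 = 0 := mod_cast Z.map_natCast 2
    simp [apply_two]
  rw [K.rm_eq_of_nabla_eq (K.nabla_eq_of_hess_add_sstar h), apply_shift, apply_shift]

open KenmotsuManifold in
/-- If the metric of a Kenmotsu manifold of dimension `2n+1` is a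
gradient almost `*`-Ricci soliton with potential function `f` (gradient `F`)
and soliton function `λ`, then
`R(X,Y)Df = (∇_Y Q)X - (∇_X Q)Y + Y(λ)X - X(λ)Y + η(X)Y - η(Y)X`. -/
theorem stmt12 {n : ℕ} {C : Type*} [CommRing C] [Algebra ℝ C]
    (K : KenmotsuManifold n C) (f l : C) (F : Derivation ℝ C C)
    (h : K.IsGradAlmostStarRicciSoliton f F l) (X Y : Derivation ℝ C C) :
    K.Rm X Y F = K.nablaQ Y X - K.nablaQ X Y + Y l • X - X l • Y
      + K.η X • Y - K.η Y • X :=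
  stmt12_general K l F h.2 X Y
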